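/- Let q be a prime power with q ≡ 2 (mod 3). Then for every natural number N there exists a squarefree (in particular cube-free) polynomial d ∈ 𝔽_q[t] such that the cubic twist y² − y = d·x³ has at least N separable ∞-integral points; that is, the set {(F, G) ∈ 𝔽_q[t] × 𝔽_q[t] : G² − G = d·F³ and G′ ≠ 0} has at least N elements. (One may take d = t^{q^n} − t with n having at least N odd divisors.) In particular, the number of separable ∞-integral points on the fibers of the surface d·x³ = y² − y cannot be bounded independently of d. -/

import Mathlib

open Polynomial

/-!
Let `p ≡ 2 (mod 3)` be the characteristic and let `m` be an odd divisor of `n`, so that `r = p ^ m`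
is again `2 (mod 3)`. The additive polynomial `T = X + X ^ r + ⋯ + X ^ (p ^ n / r)` telescopes to
`T ^ r - T = X ^ (p ^ n) - X`; multiplying by the cube `T ^ (r - 2)` gives `G ^ 2 - G = d * F ^ 3`
with `G = T ^ (r - 1)` and `d = X ^ (p ^ n) - X`, which is separable. Since `T' = 1`, we have
`G' = -T ^ (r - 2) ≠ 0`, and `G` remembers `m` through its degree `p ^ n - p ^ (n - m)`. So
`d` has at least as many points as `n` has odd divisors, and `n = 3 ^ N` has more than `N`.
-/

theorem pow_mod_three_eq_two_iff {q m : ℕ} : q ^ m % 3 = 2 ↔ q % 3 = 2 ∧ Odd m := by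
  have hq : q % 3 < 3 := Nat.mod_lt q three_pos
  obtain ⟨c, rfl | rfl⟩ := m.even_or_odd'
  · rw [pow_mul, Nat.pow_mod, Nat.pow_mod q]
    interval_cases q % 3 <;> cases c <;> simp
  · rw [pow_succ, pow_mul, Nat.mul_mod, Nat.pow_mod, Nat.pow_mod q]
    interval_cases q % 3 <;> simp

theorem ringChar_mod_three_eq_two {K : Type*} [Field K] [Fintype K]
    (hK : Fintype.card K % 3 = 2) : ringChar K % 3 = 2 := by
  obtain ⟨s, -, hcard⟩ := FiniteField.card K (ringChar K)
  exact (pow_mod_three_eq_two_iff.1 (hcard ▸ hK)).1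

theorem pow_sub_one_sq_sub_pow_sub_one {A : Type*} [CommRing A] (T : A) {r e : ℕ} (hr : 2 ≤ r)
    (he : e ∣ r - 2) :
    (T ^ (r - 1)) ^ 2 - T ^ (r - 1) = (T ^ r - T) * (T ^ ((r - 2) / e)) ^ e := by
  rw [← pow_mul T ((r - 2) / e), Nat.div_mul_cancel he]
  obtain ⟨s, rfl⟩ := Nat.exists_eq_add_of_le' hr
  simp only [Nat.add_sub_cancel, Nat.add_succ_sub_one]
  ring

theorem derivative_pow_sub_one {R : Type*} [CommRing R] {r : ℕ} (hr : r ≠ 0) (hrR : (r : R) = 0)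
    (T : R[X]) : derivative (T ^ (r - 1)) = -T ^ (r - 2) * derivative T := by
  rw [derivative_pow, Nat.cast_pred (Nat.pos_of_ne_zero hr), hrR, Nat.sub_sub]
  simp

/-- The polynomial `X + X ^ r + ⋯ + X ^ (r ^ (k - 1))`, which induces the trace of the extension
of degree `k` of a finite field with `r` elements. It serves as an explicit solution `T` of
`T ^ r - T = X ^ (r ^ k) - X` when `r` is a power of the characteristic. -/
noncomputable def tracePoly (R : Type*) [Semiring R] (r k : ℕ) : R[X] :=
  ∑ j ∈ Finset.range k, X ^ r ^ j

section tracePoly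

variable {R : Type*}

theorem tracePoly_succ [Semiring R] (r k : ℕ) :
    tracePoly R r (k + 1) = X ^ r ^ k + tracePoly R r k := by
  rw [tracePoly, Finset.sum_range_succ, add_comm, tracePoly]

theorem degree_tracePoly_lt [Semiring R] {r : ℕ} (hr : 1 < r) (k : ℕ) :
    degree (tracePoly R r k) < (r ^ k : ℕ) := by
  refine (degree_sum_le _ _).trans_lt ((Finset.sup_lt_iff (WithBot.bot_lt_coe _)).2 fun j hj => ?_)
  exact (degree_X_pow_le _).trans_lt
    (Nat.cast_lt.2 (Nat.pow_lt_pow_right hr (Finset.mem_range.1 hj)))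

theorem monic_tracePoly [Semiring R] {r k : ℕ} (hr : 1 < r) (hk : k ≠ 0) :
    (tracePoly R r k).Monic := by
  obtain ⟨k, rfl⟩ := Nat.exists_eq_succ_of_ne_zero hk
  rw [tracePoly_succ]
  exact monic_X_pow_add (degree_tracePoly_lt hr k)

theorem natDegree_tracePoly [Semiring R] [Nontrivial R] {r k : ℕ} (hr : 1 < r) (hk : k ≠ 0) :
    natDegree (tracePoly R r k) = r ^ (k - 1) := by
  obtain ⟨k, rfl⟩ := Nat.exists_eq_succ_of_ne_zero hk
  rw [tracePoly_succ]
  refine natDegree_eq_of_degree_eq_some ?_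
  rw [degree_add_eq_left_of_degree_lt] <;> rw [degree_X_pow]
  · rfl
  · exact degree_tracePoly_lt hr k

theorem derivative_tracePoly [CommSemiring R] {r k : ℕ} (hr : (r : R) = 0) (hk : k ≠ 0) :
    derivative (tracePoly R r k) = 1 := by
  obtain ⟨k, rfl⟩ := Nat.exists_eq_succ_of_ne_zero hk
  simp [tracePoly, Finset.sum_range_succ', derivative_X_pow, hr]

theorem tracePoly_pow_sub_self [CommRing R] (p : ℕ) [ExpChar R p] (m k : ℕ) :
    tracePoly R (p ^ m) k ^ p ^ m - tracePoly R (p ^ m) k = X ^ (p ^ m) ^ k - X := by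
  rw [tracePoly, sum_pow_char_pow, ← Finset.sum_sub_distrib]
  simp_rw [← pow_mul X, ← pow_succ (p ^ m)]
  rw [Finset.sum_range_sub (fun j => (X : R[X]) ^ (p ^ m) ^ j), pow_zero, pow_one]

end tracePoly

/-- The point `(F, G) = (T ^ ((r - 2) / 3), T ^ (r - 1))`, where `r = p ^ m` and
`T = tracePoly R r (n / m)`, on the cubic twist `y ^ 2 - y = d * x ^ 3` by `d = X ^ (p ^ n) - X`.
It is meaningful when `m` is an odd divisor of `n` and `p ≡ 2 (mod 3)`, so that the natural-number
divisions are exact. -/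
noncomputable def twistPoint (R : Type*) [Semiring R] (p n m : ℕ) : R[X] × R[X] :=
  (tracePoly R (p ^ m) (n / m) ^ ((p ^ m - 2) / 3), tracePoly R (p ^ m) (n / m) ^ (p ^ m - 1))

section twistPoint

variable {R : Type*} {p n m : ℕ}

theorem twistPoint_equation [CommRing R] [ExpChar R p] (hp : p % 3 = 2) (hm : Odd m)
    (hmn : m ∣ n) :
    (twistPoint R p n m).2 ^ 2 - (twistPoint R p n m).2 =
      (X ^ p ^ n - X) * (twistPoint R p n m).1 ^ 3 := by
  have hr : p ^ m % 3 = 2 := pow_mod_three_eq_two_iff.2 ⟨hp, hm⟩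
  have hT := tracePoly_pow_sub_self (R := R) p m (n / m)
  rw [← pow_mul, Nat.mul_div_cancel' hmn] at hT
  rw [← hT]
  exact pow_sub_one_sq_sub_pow_sub_one _ (by omega) (by omega)

theorem derivative_twistPoint_snd_ne_zero [CommRing R] [Nontrivial R] [CharP R p] (hp : 1 < p)
    (hn : n ≠ 0) (hmn : m ∣ n) : derivative (twistPoint R p n m).2 ≠ 0 := by
  have hm : m ≠ 0 := ne_zero_of_dvd_ne_zero hn hmn
  have hk : n / m ≠ 0 := (Nat.div_ne_zero_iff_of_dvd hmn).2 ⟨hn, hm⟩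
  have hr : 1 < p ^ m := Nat.one_lt_pow hm hp
  have hrR : ((p ^ m : ℕ) : R) = 0 := by rw [Nat.cast_pow, CharP.cast_eq_zero, zero_pow hm]
  rw [twistPoint, derivative_pow_sub_one (by omega) hrR, derivative_tracePoly hrR hk, mul_one]
  exact neg_ne_zero.2 ((monic_tracePoly hr hk).pow _).ne_zero

theorem natDegree_twistPoint_snd [Semiring R] [Nontrivial R] (hp : 1 < p) (hn : n ≠ 0)
    (hmn : m ∣ n) : natDegree (twistPoint R p n m).2 = p ^ n - p ^ (n - m) := by
  obtain ⟨k, rfl⟩ := hmn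
  obtain ⟨hm, hk⟩ := mul_ne_zero_iff.1 hn
  have hr : 1 < p ^ m := Nat.one_lt_pow hm hp
  rw [twistPoint, Nat.mul_div_cancel_left k (Nat.pos_of_ne_zero hm),
    (monic_tracePoly hr hk).natDegree_pow, natDegree_tracePoly hr hk, Nat.sub_one_mul,
    mul_pow_sub_one hk, ← pow_mul, ← pow_mul, Nat.mul_sub_one]

theorem twistPoint_injOn_divisors [Semiring R] [Nontrivial R] (hp : 1 < p) :
    Set.InjOn (twistPoint R p n) n.divisors := by
  intro a ha b hb hab
  obtain ⟨han, hn⟩ := Nat.mem_divisors.1 ha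
  have hbn : b ∣ n := Nat.dvd_of_mem_divisors hb
  have hdeg : p ^ n - p ^ (n - a) = p ^ n - p ^ (n - b) := by
    rw [← natDegree_twistPoint_snd (R := R) hp hn han, hab, natDegree_twistPoint_snd hp hn hbn]
  have hle (c : ℕ) : p ^ (n - c) ≤ p ^ n := Nat.pow_le_pow_right (by omega) (Nat.sub_le n c)
  have hexp : n - a = n - b :=
    Nat.pow_right_injective hp ((tsub_right_inj (hle a) (hle b)).1 hdeg)
  exact (tsub_right_inj (Nat.divisor_le ha) (Nat.divisor_le hb)).1 hexp

end twistPoint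

theorem stmt19_general (R : Type*) [CommRing R] (p : ℕ) [Fact p.Prime] [CharP R p]
    (hp : p % 3 = 2) (N : ℕ) :
    ∃ d : R[X], Squarefree d ∧
      ∃ P : Fin N → R[X] × R[X], Function.Injective P ∧
        ∀ i, (P i).2 ^ 2 - (P i).2 = d * (P i).1 ^ 3 ∧ derivative (P i).2 ≠ 0 := by
  have hp1 : 1 < p := Fact.out (p := p.Prime).one_lt
  have : Nontrivial R := CharP.nontrivial_of_char_ne_one hp1.ne'
  have hn : 3 ^ N ≠ 0 := by positivity
  have hdvd (i : Fin N) : 3 ^ (i : ℕ) ∣ 3 ^ N := pow_dvd_pow 3 i.2.le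
  refine ⟨X ^ p ^ 3 ^ N - X, (galois_poly_separable p _ (dvd_pow_self p hn)).squarefree,
    fun i => twistPoint R p (3 ^ N) (3 ^ (i : ℕ)), fun i j hij => ?_, fun i =>
      ⟨twistPoint_equation hp (Odd.pow (by decide)) (hdvd i),
        derivative_twistPoint_snd_ne_zero hp1 hn (hdvd i)⟩⟩
  have hpow : 3 ^ (i : ℕ) = 3 ^ (j : ℕ) := twistPoint_injOn_divisors hp1
    (Nat.mem_divisors.2 ⟨hdvd i, hn⟩) (Nat.mem_divisors.2 ⟨hdvd j, hn⟩) hij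
  exact Fin.ext (Nat.pow_right_injective (by norm_num) hpow)

theorem stmt19 (Fq : Type*) [Field Fq] [Fintype Fq]
    (hq : Fintype.card Fq % 3 = 2) (N : ℕ) :
    ∃ d : Polynomial Fq, Squarefree d ∧
      ∃ P : Fin N → Polynomial Fq × Polynomial Fq, Function.Injective P ∧
        ∀ i, (P i).2 ^ 2 - (P i).2 = d * (P i).1 ^ 3 ∧ derivative (P i).2 ≠ 0 := by
  have : Fact (ringChar Fq).Prime := ⟨CharP.char_is_prime Fq _⟩
  exact stmt19_general Fq (ringChar Fq) (ringChar_mod_three_eq_two hq) N
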